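/- Let d ≥ 1 and let b : ℝ^d → ℝ^d satisfy Assumptions (A); set M₁ := K/2 and M₂ := L·(max(R, 2|b(0)|/K))² + |b(0)|·max(R, 2|b(0)|/K). On a probability space let (ξ_k)_{k≥1} be i.i.d. with law the d-fold product of standard Gaussians N(0,1), let X₀ be an ℝ^d-valued random variable with 𝔼|X₀|² < ∞, with X₀, ξ₁, ξ₂, … jointly independent, and define the Euler chain X_{k+1} := X_k + h·b(X_k) + √h·ξ_{k+1} for k ≥ 0. Then for every h with 0 < h < K/(4L²) and every k ≥ 1: 𝔼|X_k|² ≤ 𝔼|X₀|² + (2h|b(0)|² + d + M₂)/(M₁ − 2hL²). -/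

import Mathlib

/-!
A Lipschitz drift that is contractive at infinity is dissipative: a pair of points that is too close
for contractivity to apply is stretched along its own line until it does, at a Lipschitz cost
bounded by a constant. Dissipativity and linear growth of `b` make the deterministic Euler step
`x ↦ x + h b(x)` contract `‖x‖²` by the factor `1 - 2h(M₁ - hL²)`, up to an additive constant. The
noise is centred and independent of the current state, so it adds exactly `h 𝔼‖ξ‖²` to the second
moment. The second moments therefore obey an affine recursion with factor smaller than one, whose
iterates stay within the initial value plus the fixed point.
-/

open scoped Classical
open MeasureTheory ProbabilityTheory

/-- Standard Gaussian measure `N(0, I)` on `EuclideanSpace ℝ (Fin d)`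
(the `d`-fold product of standard Gaussians `N(0,1)`). -/
noncomputable def stdGaussian (d : ℕ) : Measure (EuclideanSpace ℝ (Fin d)) :=
  (Measure.pi fun _ : Fin d => gaussianReal 0 1).map
    (MeasurableEquiv.toLp 2 (Fin d → ℝ))

open scoped NNReal RealInnerProductSpace

lemma le_add_div_of_succ_le_mul_add {𝕜 : Type*} [Field 𝕜] [LinearOrder 𝕜] [IsStrictOrderedRing 𝕜]
    {u : ℕ → 𝕜} {ρ c : 𝕜} (hρ₀ : 0 ≤ ρ) (hρ₁ : ρ < 1) (hc : 0 ≤ c) (hu₀ : 0 ≤ u 0)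
    (hu : ∀ n, u (n + 1) ≤ ρ * u n + c) (n : ℕ) : u n ≤ u 0 + c / (1 - ρ) := by
  have hρ : 0 < 1 - ρ := sub_pos.2 hρ₁
  induction n with
  | zero => exact le_add_of_nonneg_right (div_nonneg hc hρ.le)
  | succ n ih =>
    calc u (n + 1) ≤ ρ * u n + c := hu n
      _ ≤ ρ * (u 0 + c / (1 - ρ)) + c := by gcongr
      _ = ρ * u 0 + c / (1 - ρ) := by field_simp; ring
      _ ≤ u 0 + c / (1 - ρ) := by gcongr; exact mul_le_of_le_one_left hu₀ hρ₁.le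

lemma nonneg_of_forall_mul_norm_sq_add_nonneg {E : Type*} [NormedAddCommGroup E] [NormedSpace ℝ E]
    [Nontrivial E] {a c : ℝ} (hac : ∀ x : E, 0 ≤ a * ‖x‖ ^ 2 + c) : 0 ≤ a := by
  by_contra! ha
  obtain ⟨x, hx⟩ := NormedSpace.exists_lt_norm ℝ E √(c / -a)
  have hlt : c / -a < ‖x‖ ^ 2 := Real.lt_sq_of_sqrt_lt hx
  rw [div_lt_iff₀ (neg_pos.2 ha)] at hlt
  linarith [hac x]

lemma norm_le_norm_zero_add_of_lipschitzWith {E F : Type*} [SeminormedAddCommGroup E]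
    [SeminormedAddCommGroup F] {f : E → F} {L : ℝ≥0} (hf : LipschitzWith L f) (x : E) :
    ‖f x‖ ≤ ‖f 0‖ + L * ‖x‖ := by
  simpa only [dist_zero_right] using norm_le_norm_add_const_of_dist_le (hf.dist_le_mul x 0)

section Drift

variable {E : Type*} [NormedAddCommGroup E] [InnerProductSpace ℝ E] {b : E → E}

/-- Contractivity at infinity of the vector field `b`: contraction at rate `K` between any two
points at distance larger than `R`. -/
def ContractiveAtInfinity (K R : ℝ) (b : E → E) : Prop :=
  ∀ x y : E, R < ‖x - y‖ → ⟪x - y, b x - b y⟫ ≤ -K * ‖x - y‖ ^ 2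

/-- Dissipativity of the vector field `b`, that is, the quadratic Lyapunov condition with the
paper's constants `M₁` and `M₂`. -/
def Dissipative (M₁ M₂ : ℝ) (b : E → E) : Prop :=
  ∀ x : E, ⟪x, b x⟫ ≤ M₂ - M₁ * ‖x‖ ^ 2

lemma ContractiveAtInfinity.inner_sub_le {K R : ℝ} {L : ℝ≥0} (hb : ContractiveAtInfinity K R b)
    (hlip : LipschitzWith L b) (hK : 0 ≤ K) (x y : E) :
    ⟪x - y, b x - b y⟫ ≤ L * R ^ 2 - K * ‖x - y‖ ^ 2 := by
  obtain rfl | hxy := eq_or_ne x y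
  · simpa using by positivity
  set v := x - y with hv
  have hv₀ : 0 < ‖v‖ := norm_pos_iff.2 (sub_ne_zero.2 hxy)
  -- `c` is chosen so that `(1 + c) ‖v‖ > R`, while moving from `x` to `z` costs only `L * R ^ 2`.
  obtain ⟨c, hc₀, hc⟩ : ∃ c : ℝ, 0 ≤ c ∧ c * ‖v‖ ^ 2 = R ^ 2 :=
    ⟨R ^ 2 / ‖v‖ ^ 2, by positivity, by field_simp⟩
  set z := x + c • v with hz
  have hzy : z - y = (1 + c) • v := by rw [hz, hv]; module
  have hnorm : ‖z - y‖ = (1 + c) * ‖v‖ := by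
    rw [hzy, norm_smul, Real.norm_of_nonneg (by positivity)]
  have hfar : R < ‖z - y‖ := by rw [hnorm]; nlinarith [sq_nonneg (‖v‖ - R)]
  have hcontr : ⟪v, b z - b y⟫ ≤ -K * ((1 + c) * ‖v‖ ^ 2) := by
    have h := hb z y hfar
    rw [hnorm, hzy, real_inner_smul_left] at h
    exact le_of_mul_le_mul_left (h.trans_eq (by ring)) (show 0 < 1 + c by positivity)
  have hmove : ⟪v, b x - b z⟫ ≤ L * R ^ 2 :=
    calc ⟪v, b x - b z⟫ ≤ ‖v‖ * ‖b x - b z‖ := real_inner_le_norm _ _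
      _ ≤ ‖v‖ * (L * ‖x - z‖) := by gcongr; exact hlip.norm_sub_le x z
      _ = L * (c * ‖v‖ ^ 2) := by
        rw [hz, sub_add_cancel_left, norm_neg, norm_smul, Real.norm_of_nonneg hc₀]; ring
      _ = L * R ^ 2 := by rw [hc]
  calc ⟪v, b x - b y⟫ = ⟪v, b x - b z⟫ + ⟪v, b z - b y⟫ := by
        rw [← inner_add_right, sub_add_sub_cancel]
    _ ≤ L * R ^ 2 + -K * ((1 + c) * ‖v‖ ^ 2) := add_le_add hmove hcontr
    _ ≤ L * R ^ 2 - K * ‖v‖ ^ 2 := by nlinarith [mul_nonneg hK (mul_nonneg hc₀ (sq_nonneg ‖v‖))]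

lemma ContractiveAtInfinity.dissipative {K R : ℝ} {L : ℝ≥0} (hb : ContractiveAtInfinity K R b)
    (hlip : LipschitzWith L b) (hK : 0 < K) (hR : 0 ≤ R) :
    Dissipative (K / 2)
      (L * (max R (2 * ‖b 0‖ / K)) ^ 2 + ‖b 0‖ * max R (2 * ‖b 0‖ / K)) b := by
  intro x
  set r := max R (2 * ‖b 0‖ / K)
  have hRr : R ≤ r := le_max_left _ _
  have hr : 0 ≤ r := hR.trans hRr
  have hbr : 2 * ‖b 0‖ ≤ r * K := (div_le_iff₀ hK).1 (le_max_right _ _)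
  have hdiff : ⟪x, b x - b 0⟫ ≤ L * R ^ 2 - K * ‖x‖ ^ 2 := by
    simpa only [sub_zero] using hb.inner_sub_le hlip hK.le x 0
  have horigin : ‖x‖ * ‖b 0‖ ≤ ‖b 0‖ * r + K / 2 * ‖x‖ ^ 2 := by
    obtain hx | hx := le_total ‖x‖ r
    · calc ‖x‖ * ‖b 0‖ ≤ ‖b 0‖ * r := by rw [mul_comm]; gcongr
        _ ≤ ‖b 0‖ * r + K / 2 * ‖x‖ ^ 2 := le_add_of_nonneg_right (by positivity)
    · have hb₀ : ‖b 0‖ ≤ K / 2 * ‖x‖ := by linarith [mul_le_mul_of_nonneg_right hx hK.le]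
      calc ‖x‖ * ‖b 0‖ ≤ ‖x‖ * (K / 2 * ‖x‖) := by gcongr
        _ = K / 2 * ‖x‖ ^ 2 := by ring
        _ ≤ ‖b 0‖ * r + K / 2 * ‖x‖ ^ 2 :=
          le_add_of_nonneg_left (mul_nonneg (norm_nonneg _) hr)
  calc ⟪x, b x⟫ = ⟪x, b x - b 0⟫ + ⟪x, b 0⟫ := by rw [← inner_add_right, sub_add_cancel]
    _ ≤ (L * R ^ 2 - K * ‖x‖ ^ 2) + (‖b 0‖ * r + K / 2 * ‖x‖ ^ 2) :=
      add_le_add hdiff ((real_inner_le_norm _ _).trans horigin)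
    _ = L * R ^ 2 + ‖b 0‖ * r - K / 2 * ‖x‖ ^ 2 := by ring
    _ ≤ L * r ^ 2 + ‖b 0‖ * r - K / 2 * ‖x‖ ^ 2 := by gcongr

lemma Dissipative.norm_add_smul_sq_le {M₁ M₂ L β h : ℝ} (hb : Dissipative M₁ M₂ b)
    (hgrowth : ∀ x, ‖b x‖ ≤ β + L * ‖x‖) (hh : 0 ≤ h) (x : E) :
    ‖x + h • b x‖ ^ 2 ≤
      (1 - 2 * h * (M₁ - h * L ^ 2)) * ‖x‖ ^ 2 + 2 * h * (M₂ + h * β ^ 2) := by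
  have hsq : ‖b x‖ ^ 2 ≤ 2 * (β ^ 2 + (L * ‖x‖) ^ 2) :=
    (pow_le_pow_left₀ (norm_nonneg _) (hgrowth x) 2).trans add_sq_le
  calc ‖x + h • b x‖ ^ 2 = ‖x‖ ^ 2 + 2 * h * ⟪x, b x⟫ + h ^ 2 * ‖b x‖ ^ 2 := by
        rw [norm_add_sq_real, real_inner_smul_right, norm_smul, mul_pow, Real.norm_eq_abs, sq_abs,
          mul_assoc]
    _ ≤ ‖x‖ ^ 2 + 2 * h * (M₂ - M₁ * ‖x‖ ^ 2) + h ^ 2 * (2 * (β ^ 2 + (L * ‖x‖) ^ 2)) := by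
        gcongr; exact hb x
    _ = (1 - 2 * h * (M₁ - h * L ^ 2)) * ‖x‖ ^ 2 + 2 * h * (M₂ + h * β ^ 2) := by ring

end Drift

section Recursion

variable {Ω α β : Type*} {mΩ : MeasurableSpace Ω} [MeasurableSpace α] [MeasurableSpace β]
  {m : ℕ → MeasurableSpace Ω} {X : ℕ → Ω → α} {ξ : ℕ → Ω → β} {F : α → β → α}

lemma measurable_iSup_Iic_of_recursion (hF : Measurable F.uncurry) (hX₀ : Measurable[m 0] (X 0))
    (hξ : ∀ k, Measurable[m (k + 1)] (ξ (k + 1)))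
    (hrec : ∀ k ω, X (k + 1) ω = F (X k ω) (ξ (k + 1) ω)) (k : ℕ) :
    Measurable[⨆ i ∈ Set.Iic k, m i] (X k) := by
  induction k with
  | zero => exact hX₀.mono (le_iSup₂_of_le 0 Set.self_mem_Iic le_rfl) le_rfl
  | succ k ih =>
    have hX : Measurable[⨆ i ∈ Set.Iic (k + 1), m i] (X k) :=
      ih.mono (biSup_mono fun _ hi => Set.Iic_subset_Iic.2 k.le_succ hi) le_rfl
    have hξ' : Measurable[⨆ i ∈ Set.Iic (k + 1), m i] (ξ (k + 1)) :=
      (hξ k).mono (le_iSup₂_of_le (k + 1) Set.self_mem_Iic le_rfl) le_rfl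
    rw [funext (hrec k)]
    exact hF.comp (hX.prodMk hξ')

lemma indepFun_of_recursion {μ : Measure Ω} (hm : ∀ i, m i ≤ mΩ) (hindep : iIndep m μ)
    (hF : Measurable F.uncurry) (hX₀ : Measurable[m 0] (X 0))
    (hξ : ∀ k, Measurable[m (k + 1)] (ξ (k + 1)))
    (hrec : ∀ k ω, X (k + 1) ω = F (X k ω) (ξ (k + 1) ω)) (k : ℕ) :
    IndepFun (X k) (ξ (k + 1)) μ := by
  have hdisj : Disjoint (Set.Iic k) {k + 1} := by simp
  have hpast := indep_iSup_of_disjoint hm hindep hdisj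
  rw [iSup_singleton] at hpast
  exact (IndepFun_iff_Indep _ _ _).2 <| indep_of_indep_of_le_left
    (indep_of_indep_of_le_right hpast (hξ k).comap_le)
    (measurable_iSup_Iic_of_recursion hF hX₀ hξ hrec k).comap_le

end Recursion

section SecondMoments

variable {Ω E : Type*} {mΩ : MeasurableSpace Ω} {μ : Measure Ω} [NormedAddCommGroup E]
  [MeasurableSpace E] [BorelSpace E]

lemma memLp_comp_of_linear_growth {F : Type*} [NormedAddCommGroup F] [MeasurableSpace F]
    [BorelSpace F] [SecondCountableTopology F] [IsFiniteMeasure μ] {p : ENNReal} {f : E → F}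
    {X : Ω → E} {β L : ℝ} (hf : Measurable f) (hgrowth : ∀ x, ‖f x‖ ≤ β + L * ‖x‖)
    (hX : MemLp X p μ) : MemLp (fun ω => f (X ω)) p μ :=
  ((memLp_const β).add (hX.norm.const_mul L)).mono'
    (hf.comp_aemeasurable hX.aemeasurable).aestronglyMeasurable
    (.of_forall fun ω => hgrowth (X ω))

variable [InnerProductSpace ℝ E]

lemma integral_norm_add_smul_sq_of_indepFun [CompleteSpace E] [IsFiniteMeasure μ] {Y Z : Ω → E}
    (hY : MemLp Y 2 μ) (hZ : MemLp Z 2 μ) (hYZ : IndepFun Y Z μ) (hZ₀ : ∫ ω, Z ω ∂μ = 0) (c : ℝ) :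
    ∫ ω, ‖Y ω + c • Z ω‖ ^ 2 ∂μ = ∫ ω, ‖Y ω‖ ^ 2 ∂μ + c ^ 2 * ∫ ω, ‖Z ω‖ ^ 2 ∂μ := by
  have hYi : Integrable Y μ := hY.integrable one_le_two
  have hZi : Integrable Z μ := hZ.integrable one_le_two
  have hinner : Integrable (fun ω => ⟪Y ω, Z ω⟫) μ := hYZ.integrable_bilin hYi hZi (innerSL ℝ)
  have hcross : ∫ ω, ⟪Y ω, Z ω⟫ ∂μ = 0 :=
    (hYZ.integral_bilin hYi hZi (innerSL ℝ)).trans (by rw [hZ₀, map_zero])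
  have hYsq : Integrable (fun ω => ‖Y ω‖ ^ 2) μ := hY.integrable_norm_pow two_ne_zero
  have hZsq : Integrable (fun ω => ‖Z ω‖ ^ 2) μ := hZ.integrable_norm_pow two_ne_zero
  have hexpand (ω) : ‖Y ω + c • Z ω‖ ^ 2
      = ‖Y ω‖ ^ 2 + (2 * c * ⟪Y ω, Z ω⟫ + c ^ 2 * ‖Z ω‖ ^ 2) := by
    rw [norm_add_sq_real, real_inner_smul_right, norm_smul, mul_pow, Real.norm_eq_abs, sq_abs]
    ring
  have hsum : Integrable (fun ω => 2 * c * ⟪Y ω, Z ω⟫ + c ^ 2 * ‖Z ω‖ ^ 2) μ :=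
    (hinner.const_mul _).add (hZsq.const_mul _)
  simp_rw [hexpand]
  rw [integral_add hYsq hsum, integral_add (hinner.const_mul _) (hZsq.const_mul _),
    integral_const_mul, integral_const_mul, hcross, mul_zero, zero_add]

lemma integral_norm_sq_stdGaussian [FiniteDimensional ℝ E] :
    ∫ x, ‖x‖ ^ 2 ∂(ProbabilityTheory.stdGaussian E) = Module.finrank ℝ E := by
  set e := stdOrthonormalBasis ℝ E
  have hmem (i) : MemLp (fun x => ⟪e i, x⟫) 2 (ProbabilityTheory.stdGaussian E) :=
    IsGaussian.memLp_two_id.const_inner (e i)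
  have hcoord (i) : ∫ x, ⟪e i, x⟫ ^ 2 ∂(ProbabilityTheory.stdGaussian E) = 1 := by
    have hmean := integral_strongDual_stdGaussian (innerSL ℝ (e i))
    have hvar := variance_dual_stdGaussian (innerSL ℝ (e i))
    rw [variance_of_integral_eq_zero (by fun_prop) hmean] at hvar
    simpa using hvar
  simp_rw [← e.sum_sq_inner_right]
  rw [integral_finsetSum _ fun i _ => (hmem i).integrable_sq]
  simp [hcoord]

lemma memLp_two_of_hasLaw_stdGaussian [FiniteDimensional ℝ E] {Z : Ω → E}
    (hZ : HasLaw Z (ProbabilityTheory.stdGaussian E) μ) : MemLp Z 2 μ :=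
  (hZ.map_eq ▸ IsGaussian.memLp_two_id : MemLp id 2 (μ.map Z)).comp_of_map hZ.aemeasurable

lemma integral_norm_sq_of_hasLaw_stdGaussian [FiniteDimensional ℝ E] {Z : Ω → E}
    (hZ : HasLaw Z (ProbabilityTheory.stdGaussian E) μ) :
    ∫ ω, ‖Z ω‖ ^ 2 ∂μ = Module.finrank ℝ E :=
  (hZ.integral_comp (f := fun x => ‖x‖ ^ 2) (by fun_prop)).trans integral_norm_sq_stdGaussian

end SecondMoments

lemma stdGaussian_eq_stdGaussian_euclideanSpace (d : ℕ) :
    _root_.stdGaussian d = ProbabilityTheory.stdGaussian (EuclideanSpace ℝ (Fin d)) :=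
  map_pi_eq_stdGaussian

/-- `X` is the Euler chain with drift `b`, step `h` and noise `ξ`. The noise is indexed from `1`,
as in the paper. -/
def IsEulerChain {Ω E : Type*} [NormedAddCommGroup E] [NormedSpace ℝ E] (b : E → E) (h : ℝ)
    (X ξ : ℕ → Ω → E) : Prop :=
  ∀ k ω, X (k + 1) ω = X k ω + h • b (X k ω) + √h • ξ (k + 1) ω

namespace IsEulerChain

variable {Ω E : Type*} {mΩ : MeasurableSpace Ω} {μ : Measure Ω} [NormedAddCommGroup E]
  [MeasurableSpace E] [BorelSpace E] [SecondCountableTopology E] {b : E → E}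
  {h β L M₁ M₂ v : ℝ} {X ξ : ℕ → Ω → E}

lemma indepFun [NormedSpace ℝ E] (hX : IsEulerChain b h X ξ) (hb : Measurable b)
    {m : ℕ → MeasurableSpace Ω} (hm : ∀ i, m i ≤ mΩ) (hindep : iIndep m μ)
    (hX₀ : Measurable[m 0] (X 0)) (hξ : ∀ k, Measurable[m (k + 1)] (ξ (k + 1))) (k : ℕ) :
    IndepFun (X k) (ξ (k + 1)) μ :=
  indepFun_of_recursion (F := fun x z => x + h • b x + √h • z) hm hindep
    (by unfold Function.uncurry; fun_prop) hX₀ hξ hX k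

lemma memLp [NormedSpace ℝ E] [IsFiniteMeasure μ] {p : ENNReal} (hX : IsEulerChain b h X ξ)
    (hb : Measurable b) (hgrowth : ∀ x, ‖b x‖ ≤ β + L * ‖x‖) (hX₀ : MemLp (X 0) p μ)
    (hξ : ∀ k, MemLp (ξ (k + 1)) p μ) (k : ℕ) : MemLp (X k) p μ := by
  induction k with
  | zero => exact hX₀
  | succ k ih =>
    rw [funext (hX k)]
    exact (ih.add ((memLp_comp_of_linear_growth hb hgrowth ih).const_smul h)).add
      ((hξ k).const_smul √h)

lemma integral_norm_sq_succ_le [InnerProductSpace ℝ E] [CompleteSpace E]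
    [IsProbabilityMeasure μ] (hX : IsEulerChain b h X ξ) (hb : Measurable b)
    (hgrowth : ∀ x, ‖b x‖ ≤ β + L * ‖x‖) (hdiss : Dissipative M₁ M₂ b) (hh : 0 ≤ h) {k : ℕ}
    (hXk : MemLp (X k) 2 μ) (hξ : MemLp (ξ (k + 1)) 2 μ)
    (hξ₀ : ∫ ω, ξ (k + 1) ω ∂μ = 0) (hξv : ∫ ω, ‖ξ (k + 1) ω‖ ^ 2 ∂μ ≤ v)
    (hindep : IndepFun (X k) (ξ (k + 1)) μ) :
    ∫ ω, ‖X (k + 1) ω‖ ^ 2 ∂μ ≤ (1 - 2 * h * (M₁ - h * L ^ 2)) * ∫ ω, ‖X k ω‖ ^ 2 ∂μ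
      + (2 * h * (M₂ + h * β ^ 2) + h * v) := by
  set Y : Ω → E := fun ω => X k ω + h • b (X k ω)
  have hY : MemLp Y 2 μ := hXk.add ((memLp_comp_of_linear_growth hb hgrowth hXk).const_smul h)
  have hYξ : IndepFun Y (ξ (k + 1)) μ :=
    hindep.comp (φ := fun x => x + h • b x) (by fun_prop) measurable_id
  have hnoise : ∫ ω, ‖X (k + 1) ω‖ ^ 2 ∂μ
      = ∫ ω, ‖Y ω‖ ^ 2 ∂μ + h * ∫ ω, ‖ξ (k + 1) ω‖ ^ 2 ∂μ := by
    simp_rw [hX k]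
    rw [integral_norm_add_smul_sq_of_indepFun hY hξ hYξ hξ₀, Real.sq_sqrt hh]
  have hXsq : Integrable (fun ω => ‖X k ω‖ ^ 2) μ := hXk.integrable_norm_pow two_ne_zero
  have hdrift : ∫ ω, ‖Y ω‖ ^ 2 ∂μ
      ≤ (1 - 2 * h * (M₁ - h * L ^ 2)) * ∫ ω, ‖X k ω‖ ^ 2 ∂μ + 2 * h * (M₂ + h * β ^ 2) := by
    refine (integral_mono (hY.integrable_norm_pow two_ne_zero)
      ((hXsq.const_mul _).add (integrable_const _))
      fun ω => hdiss.norm_add_smul_sq_le hgrowth hh (X k ω)).trans_eq ?_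
    simp [integral_add (hXsq.const_mul _) (integrable_const _), integral_const_mul]
  rw [hnoise, ← add_assoc]
  gcongr

end IsEulerChain

theorem euler_chain_uniform_second_moment_general {Ω E : Type*} {mΩ : MeasurableSpace Ω}
    {μ : Measure Ω} [IsProbabilityMeasure μ] [NormedAddCommGroup E] [InnerProductSpace ℝ E]
    [CompleteSpace E] [Nontrivial E] [MeasurableSpace E] [BorelSpace E]
    [SecondCountableTopology E] {b : E → E} {h β L M₁ M₂ v : ℝ} {X ξ : ℕ → Ω → E}
    (hb : Measurable b) (hgrowth : ∀ x, ‖b x‖ ≤ β + L * ‖x‖) (hdiss : Dissipative M₁ M₂ b)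
    (hh : 0 < h) (hhM : h * L ^ 2 < M₁) (hX : IsEulerChain b h X ξ) (hX₀ : MemLp (X 0) 2 μ)
    (hξ : ∀ k, MemLp (ξ (k + 1)) 2 μ) (hξ₀ : ∀ k, ∫ ω, ξ (k + 1) ω ∂μ = 0)
    (hξv : ∀ k, ∫ ω, ‖ξ (k + 1) ω‖ ^ 2 ∂μ ≤ v) (hindep : ∀ k, IndepFun (X k) (ξ (k + 1)) μ)
    (k : ℕ) :
    ∫ ω, ‖X k ω‖ ^ 2 ∂μ
      ≤ ∫ ω, ‖X 0 ω‖ ^ 2 ∂μ + (M₂ + h * β ^ 2 + v / 2) / (M₁ - h * L ^ 2) := by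
  have hM : 0 < M₁ - h * L ^ 2 := sub_pos.2 hhM
  have hM₂ : 0 ≤ M₂ := by simpa using hdiss 0
  have hv : 0 ≤ v := (integral_nonneg fun ω => sq_nonneg ‖ξ 1 ω‖).trans (hξv 0)
  -- The Euler step bounds a nonnegative quantity for arbitrarily large `‖x‖`.
  have hρ : 0 ≤ 1 - 2 * h * (M₁ - h * L ^ 2) :=
    nonneg_of_forall_mul_norm_sq_add_nonneg fun x : E =>
      (sq_nonneg _).trans (hdiss.norm_add_smul_sq_le hgrowth hh.le x)
  have hbound := le_add_div_of_succ_le_mul_add (u := fun n => ∫ ω, ‖X n ω‖ ^ 2 ∂μ) hρ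
    (sub_lt_self 1 (by positivity)) (by positivity) (integral_nonneg fun ω => sq_nonneg ‖X 0 ω‖)
    (fun n => hX.integral_norm_sq_succ_le hb hgrowth hdiss hh.le
      (hX.memLp hb hgrowth hX₀ hξ n) (hξ n) (hξ₀ n) (hξv n) (hindep n)) k
  refine hbound.trans_eq ?_
  rw [sub_sub_cancel]
  field_simp

/-- **Lemma (uniform-in-time second-moment bound for the Euler chain).**
Under the Lipschitz and contractivity-at-infinity assumptions on `b`, with
`M₁ = K/2` and `M₂ = L (max(R, 2‖b 0‖/K))² + ‖b 0‖ max(R, 2‖b 0‖/K)`, the Euler chain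
`X_{k+1} = X_k + h b(X_k) + √h ξ_{k+1}` driven by i.i.d. standard Gaussians, with
`X₀, ξ₁, ξ₂, …` jointly independent, satisfies for every `0 < h < K/(4L²)` and `k ≥ 1`:
`𝔼‖X_k‖² ≤ 𝔼‖X₀‖² + (2h‖b 0‖² + d + M₂)/(M₁ - 2hL²)`. -/
theorem euler_chain_uniform_second_moment
    {d : ℕ} (hd : 1 ≤ d) (b : EuclideanSpace ℝ (Fin d) → EuclideanSpace ℝ (Fin d))
    (L K R : ℝ) (hL : 0 < L) (hK : 0 < K) (hR : 0 < R)
    (hLip : ∀ x y : EuclideanSpace ℝ (Fin d), ‖b x - b y‖ ≤ L * ‖x - y‖)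
    (hContr : ∀ x y : EuclideanSpace ℝ (Fin d), R < ‖x - y‖ →
      @inner ℝ _ _ (x - y) (b x - b y) ≤ -K * ‖x - y‖ ^ 2)
    (h : ℝ) (hh : 0 < h) (hhK : h < K / (4 * L ^ 2))
    {Ω : Type*} [MeasureSpace Ω] [IsProbabilityMeasure (ℙ : Measure Ω)]
    (X : ℕ → Ω → EuclideanSpace ℝ (Fin d)) (ξ : ℕ → Ω → EuclideanSpace ℝ (Fin d))
    (hXmeas : Measurable (X 0)) (hξmeas : ∀ k, Measurable (ξ k))
    (hX0sq : Integrable (fun ω => ‖X 0 ω‖ ^ 2) ℙ)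
    (hξlaw : ∀ k, 1 ≤ k → Measure.map (ξ k) ℙ = stdGaussian d)
    (hIndep : iIndep (fun k : ℕ =>
        if k = 0 then MeasurableSpace.comap (X 0) inferInstance
        else MeasurableSpace.comap (ξ k) inferInstance) ℙ)
    (hrec : ∀ (k : ℕ) (ω : Ω),
      X (k + 1) ω = X k ω + h • b (X k ω) + Real.sqrt h • ξ (k + 1) ω)
    (k : ℕ) (hk : 1 ≤ k) :
    ∫ ω, ‖X k ω‖ ^ 2 ∂ℙ
      ≤ ∫ ω, ‖X 0 ω‖ ^ 2 ∂ℙ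
        + (2 * h * ‖b 0‖ ^ 2 + d
            + (L * (max R (2 * ‖b 0‖ / K)) ^ 2 + ‖b 0‖ * max R (2 * ‖b 0‖ / K)))
          / (K / 2 - 2 * h * L ^ 2) := by
  have : Nonempty (Fin d) := ⟨⟨0, hd⟩⟩
  lift L to ℝ≥0 using hL.le
  have hlip : LipschitzWith L b := .of_dist_le_mul (by simpa only [dist_eq_norm] using hLip)
  have hb : Measurable b := hlip.continuous.measurable
  have hdiss := ContractiveAtInfinity.dissipative hContr hlip hK hR.le
  have hlaw (n) : HasLaw (ξ (n + 1)) (ProbabilityTheory.stdGaussian _) ℙ :=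
    ⟨(hξmeas _).aemeasurable,
      (hξlaw _ n.succ_pos).trans (stdGaussian_eq_stdGaussian_euclideanSpace d)⟩
  have hindep := IsEulerChain.indepFun hrec hb
    (by intro i; split_ifs; exacts [hXmeas.comap_le, (hξmeas i).comap_le]) hIndep
    (.of_comap_le (by simp)) fun n => .of_comap_le (by simp)
  have hhL : 0 < K / 2 - 2 * h * L ^ 2 := by linarith [(lt_div_iff₀ (by positivity)).1 hhK]
  have hhL' : h * L ^ 2 ≤ 2 * h * L ^ 2 := by gcongr; linarith
  refine (euler_chain_uniform_second_moment_general (v := d) hb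
    (norm_le_norm_zero_add_of_lipschitzWith hlip) hdiss hh (by linarith) hrec
    ((memLp_two_iff_integrable_sq_norm hXmeas.aestronglyMeasurable).2 hX0sq)
    (fun n => memLp_two_of_hasLaw_stdGaussian (hlaw n))
    (fun n => (hlaw n).integral_eq.trans integral_id_stdGaussian)
    (fun n => by simp [integral_norm_sq_of_hasLaw_stdGaussian (hlaw n)]) hindep k).trans ?_
  have hnum : 0 ≤ h * ‖b 0‖ ^ 2 := by positivity
  gcongr _ + ?_ / ?_ <;> linarith
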